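/- arXiv:2403.12063 — 2 statements merged into one kernel-verified Lean document; each statement's English description precedes it below -/
import Mathlib

section
/- (Lemma 3.3) Let h : ℝ → ℝ be a variance schedule with h(t) > 0 and h differentiable at t, and for each t define the time-t marginal density P_t(x) := (1/N) Σ_{i=1}^N g_{σ² + h(t)}(x; μⁱ). Then for every x ∈ ℝ^d, the probability-flow ODE drift −(1/2) · h′(t) · ∇_x log P_t(x) equals the velocity field v_t(x) := Σ_{i=1}^N (w_i(t, x)/2) · h′(t) · (x − μⁱ) / (σ² + h(t)), where w_i(t, x) := exp(−‖x − μⁱ‖² / (2(σ² + h(t)))) / Σ_{j=1}^N exp(−‖x − μʲ‖² / (2(σ² + h(t)))). Consequently, a curve X : ℝ → ℝ^d satisfies the PF-ODE X′(t) = −(1/2) h′(t) ∇ log P_t(X(t)) if and only if X′(t) = v_t(X(t)). -/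
open Real

/-- Isotropic Gaussian density `g_s(x; μ)` on `ℝ^d`. -/
noncomputable def gauss (d : ℕ) (s : ℝ) (x μ : EuclideanSpace ℝ (Fin d)) : ℝ :=
  (2 * Real.pi * s) ^ (-(d : ℝ) / 2) * Real.exp (-‖x - μ‖ ^ 2 / (2 * s))

/-- Time-`t` marginal density for the variance schedule `h`. -/
noncomputable def marginalAt (d N : ℕ) (μ : Fin N → EuclideanSpace ℝ (Fin d)) (σ : ℝ)
    (h : ℝ → ℝ) (t : ℝ) (x : EuclideanSpace ℝ (Fin d)) : ℝ :=
  (1 / N) * ∑ i, gauss d (σ ^ 2 + h t) x (μ i)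

/-- Softmax weights of the time-`t` marginal. -/
noncomputable def weightAt (d N : ℕ) (μ : Fin N → EuclideanSpace ℝ (Fin d)) (σ : ℝ)
    (h : ℝ → ℝ) (t : ℝ) (x : EuclideanSpace ℝ (Fin d)) (i : Fin N) : ℝ :=
  Real.exp (-‖x - μ i‖ ^ 2 / (2 * (σ ^ 2 + h t))) /
    ∑ j : Fin N, Real.exp (-‖x - μ j‖ ^ 2 / (2 * (σ ^ 2 + h t)))

/-- PF-ODE velocity field. -/
noncomputable def velocityField (d N : ℕ) (μ : Fin N → EuclideanSpace ℝ (Fin d)) (σ : ℝ)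
    (h : ℝ → ℝ) (t : ℝ) (x : EuclideanSpace ℝ (Fin d)) : EuclideanSpace ℝ (Fin d) :=
  ∑ i : Fin N,
    ((weightAt d N μ σ h t x i / 2) * deriv h t / (σ ^ 2 + h t)) • (x - μ i)

/-!
Up to an additive constant, `log P_t` is the log-sum-exp of the concave quadratics
`-‖x - μⁱ‖² / (2 (σ² + h t))`. The gradient of a log-sum-exp is the softmax-weighted average of the
gradients of the exponents, here `-(x - μⁱ) / (σ² + h t)` with weights `w_i(t, x)`; multiplying by
`-h'(t) / 2` gives the velocity field.
-/

section LogSumExp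

variable {F ι : Type*} [NormedAddCommGroup F] [InnerProductSpace ℝ F] [CompleteSpace F]

theorem hasGradientAt_norm_sub_sq (m x : F) :
    HasGradientAt (fun y ↦ ‖y - m‖ ^ 2) ((2 : ℝ) • (x - m)) x := by
  rw [hasGradientAt_iff_hasFDerivAt]
  refine ((hasFDerivAt_id x).sub_const m).norm_sq.congr_fderiv ?_
  ext v
  simp

theorem hasGradientAt_neg_norm_sub_sq_div_two_mul (s : ℝ) (m x : F) :
    HasGradientAt (fun y ↦ -‖y - m‖ ^ 2 / (2 * s)) (-s⁻¹ • (x - m)) x := by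
  simp only [hasGradientAt_iff_hasFDerivAt, div_eq_mul_inv]
  refine ((hasGradientAt_norm_sub_sq m x).hasFDerivAt.fun_neg.mul_const (2 * s)⁻¹).congr_fderiv ?_
  simp only [map_smulₛₗ, conj_trivial]
  module

theorem hasGradientAt_log_sum_exp {u : Finset ι} (hu : u.Nonempty) {f : ι → F → ℝ} {f' : ι → F}
    {x : F} (hf : ∀ i ∈ u, HasGradientAt (f i) (f' i) x) :
    HasGradientAt (fun y ↦ log (∑ i ∈ u, exp (f i y)))
      (∑ i ∈ u, (exp (f i x) / ∑ j ∈ u, exp (f j x)) • f' i) x := by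
  have hsum_pos : 0 < ∑ i ∈ u, exp (f i x) := Finset.sum_pos (fun i _ ↦ exp_pos _) hu
  have hsum : HasFDerivAt (fun y ↦ ∑ i ∈ u, exp (f i y))
      (∑ i ∈ u, exp (f i x) • InnerProductSpace.toDual ℝ F (f' i)) x :=
    HasFDerivAt.fun_sum fun i hi ↦ (hf i hi).hasFDerivAt.exp
  rw [hasGradientAt_iff_hasFDerivAt]
  refine (hsum.log hsum_pos.ne').congr_fderiv ?_
  simp only [map_sum, map_smulₛₗ, conj_trivial, Finset.smul_sum, smul_smul, div_eq_inv_mul]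

end LogSumExp

section Marginal

variable {d N : ℕ} {σ : ℝ} {h : ℝ → ℝ} {t : ℝ}

theorem log_marginalAt (hN : 0 < N) (μ : Fin N → EuclideanSpace ℝ (Fin d))
    (hs : 0 < σ ^ 2 + h t) (x : EuclideanSpace ℝ (Fin d)) :
    log (marginalAt d N μ σ h t x) =
      log (1 / N * (2 * π * (σ ^ 2 + h t)) ^ (-(d : ℝ) / 2)) +
        log (∑ i, exp (-‖x - μ i‖ ^ 2 / (2 * (σ ^ 2 + h t)))) := by
  have : Nonempty (Fin N) := Fin.pos_iff_nonempty.mp hN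
  have : (0 : ℝ) < N := Nat.cast_pos.mpr hN
  rw [← log_mul (by positivity) (Finset.sum_pos (fun i _ ↦ exp_pos _) Finset.univ_nonempty).ne']
  simp only [marginalAt, gauss, ← Finset.mul_sum, mul_assoc]

theorem hasGradientAt_log_marginalAt (hN : 0 < N) (μ : Fin N → EuclideanSpace ℝ (Fin d))
    (hs : 0 < σ ^ 2 + h t) (x : EuclideanSpace ℝ (Fin d)) :
    HasGradientAt (fun y ↦ log (marginalAt d N μ σ h t y))
      (∑ i, weightAt d N μ σ h t x i • -(σ ^ 2 + h t)⁻¹ • (x - μ i)) x := by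
  have : Nonempty (Fin N) := Fin.pos_iff_nonempty.mp hN
  have log_sum_exp_gradient := hasGradientAt_log_sum_exp Finset.univ_nonempty fun i _ ↦
    hasGradientAt_neg_norm_sub_sq_div_two_mul (σ ^ 2 + h t) (μ i) x
  simp only [log_marginalAt hN μ hs]
  exact hasGradientAt_iff_hasFDerivAt.mpr (log_sum_exp_gradient.hasFDerivAt.const_add _)

theorem neg_half_deriv_smul_gradient_log_marginalAt (hN : 0 < N)
    (μ : Fin N → EuclideanSpace ℝ (Fin d)) (hs : 0 < σ ^ 2 + h t)
    (x : EuclideanSpace ℝ (Fin d)) :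
    (-(1 / 2) * deriv h t) • gradient (fun y ↦ log (marginalAt d N μ σ h t y)) x =
      velocityField d N μ σ h t x := by
  rw [(hasGradientAt_log_marginalAt hN μ hs x).gradient, velocityField, Finset.smul_sum]
  refine Finset.sum_congr rfl fun i _ ↦ ?_
  simp only [smul_smul]
  congr 1
  ring

end Marginal

/-- (Lemma 3.3) The probability-flow ODE drift equals the softmax velocity field, and hence a
curve solves the PF-ODE iff it solves the velocity-field ODE. -/
theorem pf_ode_velocity_field (d N : ℕ) (hd : 1 ≤ d) (hN : 1 ≤ N)
    (μ : Fin N → EuclideanSpace ℝ (Fin d)) (σ : ℝ) (hσ : 0 < σ)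
    (h : ℝ → ℝ) (t : ℝ) (hpos : 0 < h t) (hdiff : DifferentiableAt ℝ h t) :
    (∀ x : EuclideanSpace ℝ (Fin d),
        (-(1 / 2) * deriv h t) • gradient (fun y => Real.log (marginalAt d N μ σ h t y)) x
          = velocityField d N μ σ h t x) ∧
    (∀ X : ℝ → EuclideanSpace ℝ (Fin d),
        HasDerivAt X
            ((-(1 / 2) * deriv h t) •
              gradient (fun y => Real.log (marginalAt d N μ σ h t y)) (X t)) t
          ↔ HasDerivAt X (velocityField d N μ σ h t (X t)) t) := by
  have hs : 0 < σ ^ 2 + h t := by positivity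
  have drift_eq := neg_half_deriv_smul_gradient_log_marginalAt hN μ hs
  exact ⟨drift_eq, fun X ↦ by rw [drift_eq]⟩
end

section
/- (Proposition 3.2, deterministic form) Let c > 0 and let x₀, x_t ∈ ℝ^d satisfy ‖x₀‖ ≤ c and ‖x_t‖ ≤ c. Suppose σ² ≤ σ_t², and suppose there exists an index k ∈ {1, …, N} with ‖x₀ − μᵏ‖² ≤ σ² + d·σ². Then the posterior density is bounded below: p_{0|t}(x₀ | x_t) ≥ (1/N) · (4πσ²)^(−d/2) · exp(−2c²/σ_t² − (d+1)/2). -/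
/-!
At every point the noisy marginal is an average of Gaussians of variance `σ² + σt² ≥ σt²`, hence at
most the peak value `(2πσt²)^(-d/2)` of the likelihood. Dividing by the marginal thus at least
cancels the normalizing constant of the likelihood, and Bayes' rule gives
`p_{0|t}(x₀ | x_t) ≥ exp(-‖x_t - x₀‖² / (2σt²)) p₀(x₀)`. The prior is in turn at least the
contribution of the single component `k`.
-/

open Real

/-- GMM prior density. -/
noncomputable def gmmPrior (d N : ℕ) (μ : Fin N → EuclideanSpace ℝ (Fin d)) (σ : ℝ)
    (x : EuclideanSpace ℝ (Fin d)) : ℝ :=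
  (1 / N) * ∑ i, gauss d (σ ^ 2) x (μ i)

/-- Noisy marginal density. -/
noncomputable def gmmMarginal (d N : ℕ) (μ : Fin N → EuclideanSpace ℝ (Fin d)) (σ σt : ℝ)
    (x : EuclideanSpace ℝ (Fin d)) : ℝ :=
  (1 / N) * ∑ i, gauss d (σ ^ 2 + σt ^ 2) x (μ i)

/-- Posterior density `p_{0|t}(x₀ | x_t)`. -/
noncomputable def gmmPosterior (d N : ℕ) (μ : Fin N → EuclideanSpace ℝ (Fin d)) (σ σt : ℝ)
    (x₀ xt : EuclideanSpace ℝ (Fin d)) : ℝ :=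
  gauss d (σt ^ 2) xt x₀ * gmmPrior d N μ σ x₀ / gmmMarginal d N μ σ σt xt

lemma rpow_neg_half_le_rpow_neg_half (d : ℕ) {a b : ℝ} (ha : 0 < a) (hab : a ≤ b) :
    b ^ (-(d : ℝ) / 2) ≤ a ^ (-(d : ℝ) / 2) :=
  rpow_le_rpow_of_nonpos ha hab (div_nonpos_of_nonpos_of_nonneg (by simp) zero_le_two)

section Gaussian

variable {d : ℕ} {s : ℝ} (x μ : EuclideanSpace ℝ (Fin d))

lemma gauss_nonneg (hs : 0 ≤ s) : 0 ≤ gauss d s x μ := by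
  unfold gauss
  positivity

lemma gauss_pos (hs : 0 < s) : 0 < gauss d s x μ := by
  unfold gauss
  positivity

lemma gauss_le_peak (hs : 0 ≤ s) : gauss d s x μ ≤ (2 * π * s) ^ (-(d : ℝ) / 2) :=
  mul_le_of_le_one_right (by positivity) <| exp_le_one_iff.mpr <|
    div_nonpos_of_nonpos_of_nonneg (neg_nonpos.mpr (sq_nonneg _)) (by positivity)

variable {x μ} in
lemma peak_mul_exp_le_gauss {r : ℝ} (hs : 0 < s) (hr : ‖x - μ‖ ^ 2 ≤ r * s) :
    (2 * π * s) ^ (-(d : ℝ) / 2) * exp (-(r / 2)) ≤ gauss d s x μ := by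
  have hexponent : -(r / 2) ≤ -‖x - μ‖ ^ 2 / (2 * s) := by
    rw [neg_div, neg_le_neg_iff, div_le_iff₀ (by positivity)]
    linarith
  unfold gauss
  gcongr

end Gaussian

section Mixture

variable {d N : ℕ} (μ : Fin N → EuclideanSpace ℝ (Fin d)) {σ σt : ℝ}

lemma gmmPrior_nonneg (σ : ℝ) (x : EuclideanSpace ℝ (Fin d)) : 0 ≤ gmmPrior d N μ σ x :=
  mul_nonneg (by positivity) (Finset.sum_nonneg fun i _ ↦ gauss_nonneg x (μ i) (sq_nonneg σ))

lemma component_le_gmmPrior (σ : ℝ) (x : EuclideanSpace ℝ (Fin d)) (k : Fin N) :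
    (1 / N) * gauss d (σ ^ 2) x (μ k) ≤ gmmPrior d N μ σ x :=
  mul_le_mul_of_nonneg_left
    (Finset.single_le_sum (f := fun i ↦ gauss d (σ ^ 2) x (μ i))
      (fun i _ ↦ gauss_nonneg x (μ i) (sq_nonneg σ)) (Finset.mem_univ k))
    (by positivity)

lemma gmmMarginal_pos (hN : 0 < N) (σ : ℝ) (hσt : σt ≠ 0) (x : EuclideanSpace ℝ (Fin d)) :
    0 < gmmMarginal d N μ σ σt x := by
  have : NeZero N := ⟨hN.ne'⟩
  exact mul_pos (by positivity)
    (Finset.sum_pos (fun i _ ↦ gauss_pos x (μ i) (by positivity)) Finset.univ_nonempty)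

lemma gmmMarginal_le_peak (σ : ℝ) (hσt : σt ≠ 0) (x : EuclideanSpace ℝ (Fin d)) :
    gmmMarginal d N μ σ σt x ≤ (2 * π * σt ^ 2) ^ (-(d : ℝ) / 2) := by
  have hcomponent (i : Fin N) :
      gauss d (σ ^ 2 + σt ^ 2) x (μ i) ≤ (2 * π * σt ^ 2) ^ (-(d : ℝ) / 2) :=
    (gauss_le_peak x (μ i) (by positivity)).trans <|
      rpow_neg_half_le_rpow_neg_half d (by positivity)
        (by gcongr; exact le_add_of_nonneg_left (sq_nonneg σ))
  rw [gmmMarginal, one_div]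
  refine inv_mul_le_of_le_mul₀ (by positivity) (by positivity) ?_
  simpa using Finset.sum_le_card_nsmul Finset.univ _ _ fun i _ ↦ hcomponent i

lemma exp_mul_gmmPrior_le_gmmPosterior (hN : 0 < N) (σ : ℝ) (hσt : σt ≠ 0)
    (x₀ xt : EuclideanSpace ℝ (Fin d)) :
    exp (-‖xt - x₀‖ ^ 2 / (2 * σt ^ 2)) * gmmPrior d N μ σ x₀ ≤
      gmmPosterior d N μ σ σt x₀ xt := by
  have hprior := gmmPrior_nonneg μ σ x₀
  rw [gmmPosterior, le_div_iff₀ (gmmMarginal_pos μ hN σ hσt xt)]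
  calc exp (-‖xt - x₀‖ ^ 2 / (2 * σt ^ 2)) * gmmPrior d N μ σ x₀ * gmmMarginal d N μ σ σt xt
      ≤ exp (-‖xt - x₀‖ ^ 2 / (2 * σt ^ 2)) * gmmPrior d N μ σ x₀ *
          (2 * π * σt ^ 2) ^ (-(d : ℝ) / 2) := by
        gcongr
        exact gmmMarginal_le_peak μ σ hσt xt
    _ = gauss d (σt ^ 2) xt x₀ * gmmPrior d N μ σ x₀ := by
        rw [gauss]
        ring

end Mixture

lemma neg_two_mul_sq_div_le_of_norm_le {E : Type*} [SeminormedAddCommGroup E] {x y : E} {c : ℝ}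
    (hx : ‖x‖ ≤ c) (hy : ‖y‖ ≤ c) {s : ℝ} (hs : 0 ≤ s) :
    -2 * c ^ 2 / s ≤ -‖x - y‖ ^ 2 / (2 * s) := by
  have hdist : ‖x - y‖ ≤ 2 * c := (norm_sub_le x y).trans (by linarith)
  calc -2 * c ^ 2 / s = -(2 * c) ^ 2 / (2 * s) := by ring
    _ ≤ -‖x - y‖ ^ 2 / (2 * s) := by gcongr

theorem gmm_posterior_lower_bound_general {d N : ℕ} (μ : Fin N → EuclideanSpace ℝ (Fin d))
    {σ σt : ℝ} (hσ : σ ≠ 0) (hσt : σt ≠ 0) {c r : ℝ} {x₀ xt : EuclideanSpace ℝ (Fin d)}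
    (hx₀ : ‖x₀‖ ≤ c) (hxt : ‖xt‖ ≤ c) {k : Fin N} (hk : ‖x₀ - μ k‖ ^ 2 ≤ r * σ ^ 2) :
    (1 / N) * (2 * π * σ ^ 2) ^ (-(d : ℝ) / 2) * exp (-2 * c ^ 2 / σt ^ 2 - r / 2) ≤
      gmmPosterior d N μ σ σt x₀ xt := by
  have hprior : (1 / N) * ((2 * π * σ ^ 2) ^ (-(d : ℝ) / 2) * exp (-(r / 2))) ≤
      gmmPrior d N μ σ x₀ :=
    (mul_le_mul_of_nonneg_left (peak_mul_exp_le_gauss (by positivity) hk) (by positivity)).trans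
      (component_le_gmmPrior μ σ x₀ k)
  have hexponent : -2 * c ^ 2 / σt ^ 2 ≤ -‖xt - x₀‖ ^ 2 / (2 * σt ^ 2) :=
    neg_two_mul_sq_div_le_of_norm_le hxt hx₀ (sq_nonneg σt)
  calc (1 / N) * (2 * π * σ ^ 2) ^ (-(d : ℝ) / 2) * exp (-2 * c ^ 2 / σt ^ 2 - r / 2)
      = exp (-2 * c ^ 2 / σt ^ 2) *
          ((1 / N) * ((2 * π * σ ^ 2) ^ (-(d : ℝ) / 2) * exp (-(r / 2)))) := by
        rw [sub_eq_add_neg, exp_add]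
        ring
    _ ≤ exp (-‖xt - x₀‖ ^ 2 / (2 * σt ^ 2)) * gmmPrior d N μ σ x₀ := by
        exact mul_le_mul (exp_le_exp.mpr hexponent) hprior (by positivity) (exp_nonneg _)
    _ ≤ gmmPosterior d N μ σ σt x₀ xt := exp_mul_gmmPrior_le_gmmPosterior μ k.pos σ hσt x₀ xt

/-- (Proposition 3.2, deterministic form) Lower bound on the posterior density. -/
theorem gmm_posterior_lower_bound (d N : ℕ) (hd : 1 ≤ d) (hN : 1 ≤ N)
    (μ : Fin N → EuclideanSpace ℝ (Fin d)) (σ σt : ℝ) (hσ : 0 < σ) (hσt : 0 < σt)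
    (c : ℝ) (hc : 0 < c) (x₀ xt : EuclideanSpace ℝ (Fin d))
    (hx₀ : ‖x₀‖ ≤ c) (hxt : ‖xt‖ ≤ c) (hσσt : σ ^ 2 ≤ σt ^ 2)
    (hk : ∃ k : Fin N, ‖x₀ - μ k‖ ^ 2 ≤ σ ^ 2 + d * σ ^ 2) :
    gmmPosterior d N μ σ σt x₀ xt
      ≥ (1 / N) * (4 * Real.pi * σ ^ 2) ^ (-(d : ℝ) / 2) *
          Real.exp (-2 * c ^ 2 / σt ^ 2 - (d + 1) / 2) := by
  obtain ⟨k, hk⟩ := hk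
  have hpeak : (4 * π * σ ^ 2) ^ (-(d : ℝ) / 2) ≤ (2 * π * σ ^ 2) ^ (-(d : ℝ) / 2) :=
    rpow_neg_half_le_rpow_neg_half d (by positivity) (by gcongr; norm_num)
  exact (by gcongr : _ ≤ _).trans <|
    gmm_posterior_lower_bound_general μ hσ.ne' hσt.ne' hx₀ hxt (r := d + 1) (by linarith)
end
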